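/- For every t > 0, the total surviving mass of the absorbing-boundary solution is given explicitly by Q(t) = ∫_{−∞}^{L} p(x, t) dx = Φ((L − x₀ − νt)/√(2Dt)) − e^{(ν/D)(L − x₀)} · Φ((x₀ − L − νt)/√(2Dt)), where Φ is the standard normal cumulative distribution function. -/

import Mathlib

/-!
With `s = √(2Dt)`, the kernel `U(·, t, η)` is the standard normal density composed with
`x ↦ (x - (η + νt)) / s` and divided by `s` (`U_eq_scaled_density`). It is therefore integrable,
and the affine substitution gives `∫_{-∞}^{L} U(x, t, η) dx = Φ((L - η - νt) / s)`
(`integral_Iic_U`). The surviving mass follows by linearity, with `η = x₀` and `η = 2L - x₀`;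
in the second case `L - η = x₀ - L`.
-/

open Real MeasureTheory

/-- The free advection–diffusion kernel `U(x, t, η)`. -/
noncomputable def U (D ν : ℝ) (x t η : ℝ) : ℝ :=
  (1 / Real.sqrt (4 * Real.pi * D * t)) * Real.exp (-(x - η - ν * t) ^ 2 / (4 * D * t))

/-- The absorbing-boundary solution `p(x, t) = U(x, t, x₀) − e^{(ν/D)(L − x₀)} U(x, t, 2L − x₀)`. -/
noncomputable def pAbs (D ν L x₀ : ℝ) (x t : ℝ) : ℝ :=
  U D ν x t x₀ - Real.exp ((ν / D) * (L - x₀)) * U D ν x t (2 * L - x₀)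

/-- The standard normal cumulative distribution function. -/
noncomputable def stdNormalCDF (z : ℝ) : ℝ :=
  ∫ u in Set.Iic z, (1 / Real.sqrt (2 * Real.pi)) * Real.exp (-u ^ 2 / 2)

/-- The density integrated by `stdNormalCDF`. -/
noncomputable def stdNormalDensity (u : ℝ) : ℝ :=
  (1 / Real.sqrt (2 * Real.pi)) * Real.exp (-u ^ 2 / 2)

lemma integrable_stdNormalDensity : Integrable stdNormalDensity := by
  have h := (integrable_exp_neg_mul_sq (b := 1 / 2) (by norm_num)).const_mul
    (1 / Real.sqrt (2 * Real.pi))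
  refine h.congr (Filter.Eventually.of_forall fun u => ?_)
  simp only [stdNormalDensity]
  ring_nf

lemma U_eq_scaled_density {D t : ℝ} (hD : 0 < D) (ht : 0 < t) (ν η x : ℝ) :
    U D ν x t η = (Real.sqrt (2 * D * t))⁻¹ *
      stdNormalDensity ((x - (η + ν * t)) / Real.sqrt (2 * D * t)) := by
  have hsqrt : Real.sqrt (4 * Real.pi * D * t) =
      Real.sqrt (2 * D * t) * Real.sqrt (2 * Real.pi) := by
    rw [← Real.sqrt_mul (by positivity)]
    ring_nf
  have hexp : -(x - η - ν * t) ^ 2 / (4 * D * t) =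
      -((x - (η + ν * t)) / Real.sqrt (2 * D * t)) ^ 2 / 2 := by
    rw [div_pow, Real.sq_sqrt (by positivity)]
    field_simp
    ring
  rw [U, stdNormalDensity, hsqrt, hexp, one_div, one_div, mul_inv, mul_assoc]

lemma integrable_U {D t : ℝ} (hD : 0 < D) (ht : 0 < t) (ν η : ℝ) :
    Integrable fun x => U D ν x t η := by
  have hs : Real.sqrt (2 * D * t) ≠ 0 := by positivity
  simp_rw [U_eq_scaled_density hD ht]
  exact ((integrable_stdNormalDensity.comp_div hs).comp_sub_right (η + ν * t)).const_mul _

lemma integral_Iic_U {D t : ℝ} (hD : 0 < D) (ht : 0 < t) (ν η L : ℝ) :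
    ∫ x in Set.Iic L, U D ν x t η =
      stdNormalCDF ((L - η - ν * t) / Real.sqrt (2 * D * t)) := by
  set s := Real.sqrt (2 * D * t) with hs_def
  have hs : 0 < s := by positivity
  set z := (L - η - ν * t) / s with hz
  -- Extending by zero turns the half-line integrals into integrals over `ℝ`, where the
  -- translation and scaling invariance of Lebesgue measure apply.
  have hind : ∀ x, (Set.Iic L).indicator (fun x => U D ν x t η) x =
      s⁻¹ * (Set.Iic z).indicator stdNormalDensity ((x - (η + ν * t)) / s) := by
    intro x
    have hiff : (x - (η + ν * t)) / s ≤ z ↔ x ≤ L := by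
      rw [hz, div_le_div_iff_of_pos_right hs]
      constructor <;> intro h <;> linarith
    by_cases hx : x ≤ L
    · rw [Set.indicator_of_mem (Set.mem_Iic.2 hx),
        Set.indicator_of_mem (Set.mem_Iic.2 (hiff.2 hx)), U_eq_scaled_density hD ht]
    · rw [Set.indicator_of_notMem (mt Set.mem_Iic.1 hx),
        Set.indicator_of_notMem (mt Set.mem_Iic.1 (mt hiff.1 hx)), mul_zero]
  rw [← integral_indicator measurableSet_Iic]
  simp_rw [hind]
  rw [integral_const_mul,
    integral_sub_right_eq_self
      (fun y => (Set.Iic z).indicator stdNormalDensity (y / s)) (η + ν * t),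
    Measure.integral_comp_div, abs_of_pos hs, smul_eq_mul, inv_mul_cancel_left₀ hs.ne',
    integral_indicator measurableSet_Iic]
  rfl

/-- For every `t > 0`, the total surviving mass of the absorbing-boundary solution is
`Q(t) = Φ((L − x₀ − νt)/√(2Dt)) − e^{(ν/D)(L − x₀)} Φ((x₀ − L − νt)/√(2Dt))`. -/
theorem pAbs_surviving_mass (D ν L x₀ : ℝ) (hD : 0 < D) (hx₀ : x₀ < L) :
    ∀ t : ℝ, 0 < t →
      ∫ x in Set.Iic L, pAbs D ν L x₀ x t =
        stdNormalCDF ((L - x₀ - ν * t) / Real.sqrt (2 * D * t))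
          - Real.exp ((ν / D) * (L - x₀)) *
            stdNormalCDF ((x₀ - L - ν * t) / Real.sqrt (2 * D * t)) := by
  intro t ht
  simp only [pAbs]
  rw [integral_sub (integrable_U hD ht ν x₀).integrableOn
      ((integrable_U hD ht ν (2 * L - x₀)).const_mul _).integrableOn,
    integral_const_mul, integral_Iic_U hD ht, integral_Iic_U hD ht,
    show L - (2 * L - x₀) = x₀ - L by ring]
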